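/- Let R be an EZ-category and X a set-valued presheaf on R. Then any element x : R[r] → X factors, in an essentially unique way, as a degeneracy operator ρ_x : R[r] ↠ R[s] followed by a non-degenerate element σ_x : R[s] → X; essentially unique means that between any two such factorizations there is a unique isomorphism R[s] ≅ R[s'] making both triangles commute. -/

import Mathlib

namespace GenReedyPaper

open CategoryTheory CategoryTheory.Limits

universe w v u

/-- `f` is a retract of `g` in the arrow category. -/
def IsRetractOf {E : Type u} [Category.{v} E] {A B X Y : E} (f : A ⟶ B) (g : X ⟶ Y) : Prop :=
  ∃ (i : A ⟶ X) (p : X ⟶ A) (j : B ⟶ Y) (q : Y ⟶ B),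
    i ≫ p = 𝟙 A ∧ j ≫ q = 𝟙 B ∧ i ≫ g = f ≫ j ∧ g ≫ q = p ≫ f

/-- A Quillen (closed) model structure on a category: three classes of maps
(weak equivalences, cofibrations, fibrations) satisfying two-out-of-three,
closure under retracts, the lifting axioms and the factorization axioms. -/
structure ModelStr (E : Type u) [Category.{v} E] where
  weq : MorphismProperty E
  cof : MorphismProperty E
  fib : MorphismProperty E
  weq_comp : ∀ {X Y Z : E} (f : X ⟶ Y) (g : Y ⟶ Z), weq f → weq g → weq (f ≫ g)
  weq_cancel_left : ∀ {X Y Z : E} (f : X ⟶ Y) (g : Y ⟶ Z), weq f → weq (f ≫ g) → weq g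
  weq_cancel_right : ∀ {X Y Z : E} (f : X ⟶ Y) (g : Y ⟶ Z), weq g → weq (f ≫ g) → weq f
  weq_retract : ∀ {A B X Y : E} (f : A ⟶ B) (g : X ⟶ Y), IsRetractOf f g → weq g → weq f
  cof_retract : ∀ {A B X Y : E} (f : A ⟶ B) (g : X ⟶ Y), IsRetractOf f g → cof g → cof f
  fib_retract : ∀ {A B X Y : E} (f : A ⟶ B) (g : X ⟶ Y), IsRetractOf f g → fib g → fib f
  lift_trivCof_fib : ∀ {A B X Y : E} (i : A ⟶ B) (p : X ⟶ Y),
    cof i → weq i → fib p → HasLiftingProperty i p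
  lift_cof_trivFib : ∀ {A B X Y : E} (i : A ⟶ B) (p : X ⟶ Y),
    cof i → fib p → weq p → HasLiftingProperty i p
  fact_trivCof_fib : ∀ {X Y : E} (f : X ⟶ Y),
    ∃ (Z : E) (g : X ⟶ Z) (h : Z ⟶ Y), cof g ∧ weq g ∧ fib h ∧ g ≫ h = f
  fact_cof_trivFib : ∀ {X Y : E} (f : X ⟶ Y),
    ∃ (Z : E) (g : X ⟶ Z) (h : Z ⟶ Y), cof g ∧ fib h ∧ weq h ∧ g ≫ h = f

/-- A generalized Reedy structure in the sense of Berger--Moerdijk: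
wide subcategories `plus` (`R⁺`) and `minus` (`R⁻`) and a degree function
satisfying axioms (i)-(iv) of Definition 1.1. -/
structure GRStructure (R : Type u) [Category.{v} R] where
  plus : MorphismProperty R
  minus : MorphismProperty R
  deg : R → ℕ
  plus_id : ∀ r : R, plus (𝟙 r)
  minus_id : ∀ r : R, minus (𝟙 r)
  plus_comp : ∀ {r s t : R} (f : r ⟶ s) (g : s ⟶ t), plus f → plus g → plus (f ≫ g)
  minus_comp : ∀ {r s t : R} (f : r ⟶ s) (g : s ⟶ t), minus f → minus g → minus (f ≫ g)
  /-- (i): non-invertible morphisms of `R⁺` raise the degree -/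
  plus_raises : ∀ {r s : R} (f : r ⟶ s), plus f → ¬ IsIso f → deg r < deg s
  /-- (i): non-invertible morphisms of `R⁻` lower the degree -/
  minus_lowers : ∀ {r s : R} (f : r ⟶ s), minus f → ¬ IsIso f → deg s < deg r
  /-- (i): isomorphisms preserve the degree -/
  iso_deg : ∀ {r s : R} (f : r ⟶ s), IsIso f → deg r = deg s
  /-- (ii): `R⁺ ∩ R⁻ = Iso(R)` -/
  iso_iff : ∀ {r s : R} (f : r ⟶ s), (plus f ∧ minus f) ↔ IsIso f
  /-- (iii): every morphism factors as a map of `R⁻` followed by a map of `R⁺` -/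
  factor : ∀ {r s : R} (f : r ⟶ s),
    ∃ (t : R) (h : r ⟶ t) (g : t ⟶ s), minus h ∧ plus g ∧ h ≫ g = f
  /-- (iii): the factorization is unique up to isomorphism -/
  factor_unique : ∀ {r s : R} (f : r ⟶ s) {t t' : R} (h : r ⟶ t) (g : t ⟶ s)
    (h' : r ⟶ t') (g' : t' ⟶ s), minus h → plus g → h ≫ g = f →
    minus h' → plus g' → h' ≫ g' = f →
    ∃ θ : t ≅ t', h ≫ θ.hom = h' ∧ θ.hom ≫ g' = g
  /-- (iv): if `θ∘f = f` for an isomorphism `θ` and `f ∈ R⁻`, then `θ` is an identity -/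
  minus_cancel : ∀ {r s : R} (f : r ⟶ s) (θ : Aut s), minus f → f ≫ θ.hom = f → θ = 1

/-- Axiom (iv)': a generalized Reedy structure is dualizable if
`f∘θ = f` with `θ` an isomorphism and `f ∈ R⁺` implies that `θ` is an identity. -/
def GRStructure.Dualizable {R : Type u} [Category.{v} R] (S : GRStructure R) : Prop :=
  ∀ {r s : R} (f : r ⟶ s) (θ : Aut r), S.plus f → θ.hom ≫ f = f → θ = 1

/-- A morphism of generalized Reedy categories: a functor preserving `R⁺`, `R⁻`
and the degree. -/
structure IsGRMorphism {R : Type u} [Category.{v} R] {S : Type w} [Category.{v} S]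
    (RS : GRStructure R) (SS : GRStructure S) (φ : R ⥤ S) : Prop where
  map_plus : ∀ {r s : R} (f : r ⟶ s), RS.plus f → SS.plus (φ.map f)
  map_minus : ∀ {r s : R} (f : r ⟶ s), RS.minus f → SS.minus (φ.map f)
  map_deg : ∀ r : R, SS.deg (φ.obj r) = RS.deg r


section EZ

open Opposite

variable {R : Type v} [SmallCategory R]

/-- An Eilenberg–Zilber (EZ-) structure on a small category `R` (Definition 6.6):
a degree function such that (i) monomorphisms preserve (resp. raise) the degree iff
they are invertible (resp. non-invertible); (ii) every morphism factors as a split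
epimorphism followed by a monomorphism; (iii) every pair of split epimorphisms with
common domain has an absolute pushout (a pushout preserved by the Yoneda embedding,
equivalently by every functor). -/
structure EZStructure (R : Type v) [SmallCategory R] where
  deg : R → ℕ
  mono_iso_deg : ∀ {r s : R} (f : r ⟶ s), Mono f → IsIso f → deg r = deg s
  mono_raises : ∀ {r s : R} (f : r ⟶ s), Mono f → ¬ IsIso f → deg r < deg s
  factor : ∀ {r s : R} (f : r ⟶ s), ∃ (t : R) (p : r ⟶ t) (m : t ⟶ s),
    IsSplitEpi p ∧ Mono m ∧ p ≫ m = f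
  absolute_pushout : ∀ {r s t : R} (p : r ⟶ s) (q : r ⟶ t),
    IsSplitEpi p → IsSplitEpi q →
    ∃ (z : R) (p' : s ⟶ z) (q' : t ⟶ z),
      IsPushout (yoneda.map p) (yoneda.map q) (yoneda.map p') (yoneda.map q')

/-- An element `x : R[r] → X` of a presheaf is degenerate if it factors through a
non-invertible degeneracy operator (split epimorphism) `R[r] → R[s]`. -/
def IsDegenerate (X : Rᵒᵖ ⥤ Type v) {r : R} (x : yoneda.obj r ⟶ X) : Prop :=
  ∃ (s : R) (p : r ⟶ s), IsSplitEpi p ∧ ¬ IsIso p ∧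
    ∃ y : yoneda.obj s ⟶ X, yoneda.map p ≫ y = x

end EZ

section Stmt16

open CategoryTheory Opposite

variable {R : Type v} [SmallCategory R]

/-!
Degeneracies can be split off `x` only finitely often, since the section of a non-invertible
degeneracy is a non-invertible monomorphism and so raises the degree. For uniqueness, two
factorizations `x = σ ∘ ρ = σ' ∘ ρ'` induce a map out of the absolute pushout of `ρ` and `ρ'`.
Since representables are projective, the legs of this pushout are again degeneracies, and
`σ` and `σ'` factor through one each; non-degeneracy makes both legs invertible.
-/

section General

variable {C : Type u} [Category.{v} C]

/-- The object `s` is the target of a non-invertible degeneracy operator out of `r`.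
Well-foundedness of this relation replaces the degree function in the general
Eilenberg–Zilber lemma. -/
def IsProperSplitQuotient (s r : C) : Prop :=
  ∃ p : r ⟶ s, IsSplitEpi p ∧ ¬ IsIso p

/-- The span `p`, `q` has an absolute pushout, encoded as a square in `C` which the Yoneda
embedding sends to a pushout square. -/
def HasAbsolutePushout {r s t : C} (p : r ⟶ s) (q : r ⟶ t) : Prop :=
  ∃ (z : C) (a : s ⟶ z) (b : t ⟶ z),
    IsPushout (yoneda.map p) (yoneda.map q) (yoneda.map a) (yoneda.map b)

/-- Non-degenerate elements of a presheaf on a category of any size. The definition is phrased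
positively: every degeneracy operator through which the element factors is invertible. -/
def IsNondegenerate {X : Cᵒᵖ ⥤ Type v} {s : C} (σ : yoneda.obj s ⟶ X) : Prop :=
  ∀ ⦃t : C⦄ (q : s ⟶ t) [IsSplitEpi q] (y : yoneda.obj t ⟶ X), yoneda.map q ≫ y = σ → IsIso q

theorem epi_yoneda_map_iff {r s : C} (p : r ⟶ s) : Epi (yoneda.map p) ↔ IsSplitEpi p := by
  refine ⟨fun _ => ?_, fun _ => inferInstance⟩
  obtain ⟨i, hi⟩ := (epi_iff_surjective ((yoneda.map p).app (op s))).1 inferInstance (𝟙 s)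
  exact .mk' ⟨i, hi⟩

theorem isSplitEpi_inr_of_isPushout_yoneda_map {r s t z : C} {p : r ⟶ s} {q : r ⟶ t}
    {a : s ⟶ z} {b : t ⟶ z} [IsSplitEpi p]
    (h : IsPushout (yoneda.map p) (yoneda.map q) (yoneda.map a) (yoneda.map b)) :
    IsSplitEpi b :=
  (epi_yoneda_map_iff b).1 <|
    MorphismProperty.of_isPushout (P := .epimorphisms _) h.flip <|
      (epi_yoneda_map_iff p).2 inferInstance

variable {X : Cᵒᵖ ⥤ Type v}

theorem exists_isSplitEpi_comp_isNondegenerate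
    (hC : WellFounded (IsProperSplitQuotient (C := C))) {r : C} (x : yoneda.obj r ⟶ X) :
    ∃ (s : C) (p : r ⟶ s) (σ : yoneda.obj s ⟶ X),
      IsSplitEpi p ∧ IsNondegenerate σ ∧ yoneda.map p ≫ σ = x := by
  induction r using hC.induction with
  | _ r ih =>
    by_cases hx : IsNondegenerate x
    · exact ⟨r, 𝟙 r, x, inferInstance, hx, by simp⟩
    · simp only [IsNondegenerate, not_forall] at hx
      obtain ⟨t, q, hq, y, rfl, hq'⟩ := hx
      obtain ⟨s, p, σ, hp, hσ, rfl⟩ := ih t ⟨q, hq, hq'⟩ y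
      exact ⟨s, q ≫ p, σ, inferInstance, hσ, by simp⟩

theorem IsNondegenerate.exists_iso_of_hasAbsolutePushout {r s s' : C} {p : r ⟶ s} {p' : r ⟶ s'}
    {σ : yoneda.obj s ⟶ X} {σ' : yoneda.obj s' ⟶ X} [IsSplitEpi p] [IsSplitEpi p']
    (hσ : IsNondegenerate σ) (hσ' : IsNondegenerate σ') (hpo : HasAbsolutePushout p p')
    (h : yoneda.map p ≫ σ = yoneda.map p' ≫ σ') :
    ∃ θ : s ≅ s', p ≫ θ.hom = p' := by
  obtain ⟨z, a, b, hab⟩ := hpo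
  have : IsSplitEpi a := isSplitEpi_inr_of_isPushout_yoneda_map hab.flip
  have : IsSplitEpi b := isSplitEpi_inr_of_isPushout_yoneda_map hab
  have : IsIso a := hσ a (hab.desc σ σ' h) (hab.inl_desc ..)
  have : IsIso b := hσ' b (hab.desc σ σ' h) (hab.inr_desc ..)
  have w : p ≫ a = p' ≫ b := yoneda.map_injective (by simpa using hab.w)
  exact ⟨asIso a ≪≫ (asIso b).symm, by simp [reassoc_of% w]⟩

theorem IsNondegenerate.existsUnique_iso_of_hasAbsolutePushout {r s s' : C} {p : r ⟶ s}
    {p' : r ⟶ s'} {σ : yoneda.obj s ⟶ X} {σ' : yoneda.obj s' ⟶ X} [IsSplitEpi p] [IsSplitEpi p']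
    (hσ : IsNondegenerate σ) (hσ' : IsNondegenerate σ') (hpo : HasAbsolutePushout p p')
    (h : yoneda.map p ≫ σ = yoneda.map p' ≫ σ') :
    ∃! θ : s ≅ s', p ≫ θ.hom = p' ∧ yoneda.map θ.hom ≫ σ' = σ := by
  obtain ⟨θ, hθ⟩ := hσ.exists_iso_of_hasAbsolutePushout hσ' hpo h
  refine ⟨θ, ⟨hθ, ?_⟩, fun φ ⟨hφ, _⟩ => ?_⟩
  · rw [← cancel_epi (yoneda.map p), ← Functor.map_comp_assoc, hθ, h]
  · ext
    rw [← cancel_epi p, hφ, hθ]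

theorem eilenberg_zilber_lemma_general (hC : WellFounded (IsProperSplitQuotient (C := C)))
    (hpo : ∀ {r s t : C} (p : r ⟶ s) (q : r ⟶ t),
      IsSplitEpi p → IsSplitEpi q → HasAbsolutePushout p q)
    (X : Cᵒᵖ ⥤ Type v) (r : C) (x : yoneda.obj r ⟶ X) :
    ∃ (s : C) (p : r ⟶ s) (σ : yoneda.obj s ⟶ X),
      IsSplitEpi p ∧ IsNondegenerate σ ∧ yoneda.map p ≫ σ = x ∧
      ∀ (s' : C) (p' : r ⟶ s') (σ' : yoneda.obj s' ⟶ X),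
        IsSplitEpi p' → IsNondegenerate σ' → yoneda.map p' ≫ σ' = x →
        ∃! θ : s ≅ s', p ≫ θ.hom = p' ∧ yoneda.map θ.hom ≫ σ' = σ := by
  obtain ⟨s, p, σ, hp, hσ, hx⟩ := exists_isSplitEpi_comp_isNondegenerate hC x
  exact ⟨s, p, σ, hp, hσ, hx, fun s' p' σ' hp' hσ' hx' =>
    hσ.existsUnique_iso_of_hasAbsolutePushout hσ' (hpo p p' hp hp') (hx.trans hx'.symm)⟩

end General

theorem not_isDegenerate_iff_isNondegenerate {X : Rᵒᵖ ⥤ Type v} {r : R} (x : yoneda.obj r ⟶ X) :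
    ¬ IsDegenerate X x ↔ IsNondegenerate x := by
  grind [IsDegenerate, IsNondegenerate]

theorem EZStructure.deg_lt_deg (EZ : EZStructure R) {r s : R} (p : r ⟶ s) [IsSplitEpi p]
    (hp : ¬ IsIso p) : EZ.deg s < EZ.deg r :=
  EZ.mono_raises (section_ p) inferInstance fun _ => hp (.of_epi_section p)

theorem EZStructure.wellFounded_isProperSplitQuotient (EZ : EZStructure R) :
    WellFounded (IsProperSplitQuotient (C := R)) :=
  Subrelation.wf (fun ⟨p, _, hp⟩ => EZ.deg_lt_deg p hp) (measure EZ.deg).wf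

/-- **Proposition 6.7 (Eilenberg–Zilber lemma)**. Let `R` be an EZ-category and `X` a
set-valued presheaf on `R`.  Then every element `x : R[r] → X` factors, in an
essentially unique way, as a degeneracy operator `ρ : R[r] ↠ R[s]` followed by a
non-degenerate element `σ : R[s] → X`; between any two such factorizations there is a
unique isomorphism making both triangles commute. -/
theorem eilenberg_zilber_lemma (EZ : EZStructure R) (X : Rᵒᵖ ⥤ Type v)
    (r : R) (x : yoneda.obj r ⟶ X) :
    ∃ (s : R) (p : r ⟶ s) (σ : yoneda.obj s ⟶ X),
      IsSplitEpi p ∧ ¬ IsDegenerate X σ ∧ yoneda.map p ≫ σ = x ∧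
      ∀ (s' : R) (p' : r ⟶ s') (σ' : yoneda.obj s' ⟶ X),
        IsSplitEpi p' → ¬ IsDegenerate X σ' → yoneda.map p' ≫ σ' = x →
        ∃! θ : s ≅ s', p ≫ θ.hom = p' ∧ yoneda.map θ.hom ≫ σ' = σ := by
  simpa only [not_isDegenerate_iff_isNondegenerate] using
    eilenberg_zilber_lemma_general EZ.wellFounded_isProperSplitQuotient EZ.absolute_pushout X r x

end Stmt16

end GenReedyPaper
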